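/- For every σ > 0 and q ∈ (0,1], the Kullback–Leibler divergence between the Gaussian N(q, σ²) and the mixture q·N(1, σ²) + (1−q)·N(0, σ²) satisfies KL(N(q,σ²), q·N(1,σ²) + (1−q)·N(0,σ²)) = E_{x∼N(0,1)}[f_x(1/σ)]. -/

import Mathlib

/-!
`N(q, σ²)` is the law of `σ x + q` for `x ∼ N(0, 1)`. Substituting `t = σ x + q` turns each density
`N(m, σ²)` at `t` into `σ⁻¹ φ(x + (q - m) / σ)` (`gaussianPDFReal_affine`), and the common factor
`σ⁻¹` cancels in the ratio, leaving exactly `f_x(1/σ)`. The change of variables is along a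
measurable embedding, so the two Bochner integrals agree with no integrability argument.
-/

open MeasureTheory ProbabilityTheory Real

/-- The standard normal density `φ(t) = (2π)^{−1/2}·e^{−t²/2}`. -/
noncomputable def stdphi (t : ℝ) : ℝ := (Real.sqrt (2 * π))⁻¹ * Real.exp (-t ^ 2 / 2)

/-- `f_x(u) = ln( φ(x) / ( q·φ(x − (1−q)u) + (1−q)·φ(x + qu) ) )`. -/
noncomputable def fX (q x u : ℝ) : ℝ :=
  Real.log (stdphi x / (q * stdphi (x - (1 - q) * u) + (1 - q) * stdphi (x + q * u)))

lemma gaussianPDFReal_affine (σ m q x : ℝ) (hσ : 0 < σ) :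
    gaussianPDFReal m (σ ^ 2).toNNReal (σ * x + q) = σ⁻¹ * stdphi (x + (q - m) / σ) := by
  have hsqrt : √(2 * π * σ ^ 2) = √(2 * π) * σ := by
    rw [Real.sqrt_mul (by positivity), Real.sqrt_sq hσ.le]
  rw [gaussianPDFReal, stdphi, Real.coe_toNNReal _ (sq_nonneg σ), hsqrt, mul_inv]
  have hexp : -(σ * x + q - m) ^ 2 / (2 * σ ^ 2) = -(x + (q - m) / σ) ^ 2 / 2 := by
    field_simp
    ring
  rw [hexp]
  ring

lemma gaussianReal_eq_map_affine (σ q : ℝ) :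
    gaussianReal q (σ ^ 2).toNNReal = (gaussianReal 0 1).map (fun x ↦ σ * x + q) := by
  have hcomp : (fun x : ℝ ↦ σ * x + q) = (fun x ↦ x + q) ∘ (fun x ↦ σ * x) := rfl
  rw [hcomp, ← Measure.map_map (by fun_prop) (by fun_prop), gaussianReal_map_const_mul,
    gaussianReal_map_add_const]
  congr 1
  · simp
  · ext
    simp [sq_nonneg]

/-- The KL divergence `KL(N(q,σ²), q·N(1,σ²) + (1−q)·N(0,σ²))`, written as the integral of
the log-density ratio against `N(q,σ²)`, equals `E_{x∼N(0,1)}[f_x(1/σ)]`. -/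
theorem kl_gaussian_mixture_eq_integral_fX (σ q : ℝ) (hσ : 0 < σ)
    (hq : q ∈ Set.Ioc (0 : ℝ) 1) :
    (∫ t, Real.log (gaussianPDFReal q (σ ^ 2).toNNReal t /
          (q * gaussianPDFReal 1 (σ ^ 2).toNNReal t
            + (1 - q) * gaussianPDFReal 0 (σ ^ 2).toNNReal t))
        ∂(gaussianReal q (σ ^ 2).toNNReal)) =
      ∫ x, fX q x (1 / σ) ∂(gaussianReal 0 1) := by
  rw [gaussianReal_eq_map_affine σ q]
  have hemb : MeasurableEmbedding (fun x : ℝ ↦ σ * x + q) :=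
    (measurableEmbedding_addRight q).comp (measurableEmbedding_mulLeft₀ hσ.ne')
  rw [hemb.integral_map]
  refine integral_congr_ae (Filter.Eventually.of_forall fun x ↦ ?_)
  simp only [gaussianPDFReal_affine σ _ q x hσ, fX]
  have hq0 : x + (q - q) / σ = x := by simp
  have hq1 : x + (q - 1) / σ = x - (1 - q) * (1 / σ) := by ring
  have hq2 : x + (q - 0) / σ = x + q * (1 / σ) := by ring
  rw [hq0, hq1, hq2]
  congr 1
  rw [← mul_div_mul_left (stdphi x) _ (inv_ne_zero hσ.ne')]
  congr 1
  ring
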